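/- Let T be an expanding Markov map of the interval with symbolic representation (Σ,σ) and natural projection π : Σ → Λ, and for each n let D_n : Σ → ℝ be defined by D_n(ω) := diam(I(i₁,…,i_n)), the diameter of the length-n cylinder interval containing π(ω). Then the sequence of functions log D := (log D_n)_n is asymptotically additive on Σ. -/

import Mathlib

open MeasureTheory Filter Topology Set

namespace WG

/-- The one-sided subshift of finite type determined by a 0-1 transition matrix `M`. -/
abbrev Space {k : ℕ} (M : Matrix (Fin k) (Fin k) ℕ) : Type :=
  {ω : ℕ → Fin k // ∀ i : ℕ, M (ω i) (ω (i + 1)) = 1}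

variable {k : ℕ}

/-- The shift map on the subshift. -/
def shift (M : Matrix (Fin k) (Fin k) ℕ) (ω : Space M) : Space M :=
  ⟨fun i => ω.1 (i + 1), fun i => ω.2 (i + 1)⟩

/-- `M` is a 0-1 matrix and the subshift is topologically mixing:
some power of `M` has all entries strictly positive. -/
def Mixing (M : Matrix (Fin k) (Fin k) ℕ) : Prop :=
  (∀ i j, M i j = 0 ∨ M i j = 1) ∧ ∃ l : ℕ, 0 < l ∧ ∀ i j, 0 < (M ^ l) i j

/-- The cylinder `C_{w₀ … w_{n-1}}`. -/
def cyl (M : Matrix (Fin k) (Fin k) ℕ) (n : ℕ) (w : Fin n → Fin k) : Set (Space M) :=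
  {ω | ∀ j : Fin n, ω.1 j.1 = w j}

/-- The initial word of length `n` of a point `ω`. -/
def word (M : Matrix (Fin k) (Fin k) ℕ) (n : ℕ) (ω : Space M) : Fin n → Fin k :=
  fun j => ω.1 j.1

/-- Birkhoff sums `S_n f`. -/
noncomputable def birk (M : Matrix (Fin k) (Fin k) ℕ) (f : Space M → ℝ) (n : ℕ)
    (ω : Space M) : ℝ :=
  ∑ j ∈ Finset.range n, f ((shift M)^[j] ω)

/-- The standard metric `d(ω,κ) = ∑ᵢ |ωᵢ - κᵢ| / 2^{i+1}` on the shift space. -/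
noncomputable def dist' (M : Matrix (Fin k) (Fin k) ℕ) (ω κ : Space M) : ℝ :=
  ∑' i : ℕ, |((ω.1 i : ℕ) : ℝ) - ((κ.1 i : ℕ) : ℝ)| / 2 ^ (i + 1)

/-- `E` is an `(n,ε)`-separated set. -/
def IsSep (M : Matrix (Fin k) (Fin k) ℕ) (n : ℕ) (ε : ℝ) (E : Finset (Space M)) : Prop :=
  ∀ ω ∈ E, ∀ κ ∈ E, ω ≠ κ → ∃ i < n, ε < dist' M ((shift M)^[i] ω) ((shift M)^[i] κ)

/-- `P(Φ, n, ε)`: supremum of `∑_{ω ∈ E} exp(φ_n ω)` over `(n,ε)`-separated sets `E`. -/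
noncomputable def sepSum (M : Matrix (Fin k) (Fin k) ℕ) (Φ : ℕ → Space M → ℝ)
    (n : ℕ) (ε : ℝ) : ℝ :=
  sSup {s | ∃ E : Finset (Space M), IsSep M n ε E ∧ s = ∑ ω ∈ E, Real.exp (Φ n ω)}

/-- `P` is the topological pressure of the sequence `Φ`:
`P = lim_{ε→0⁺} limsup_n (1/n) log P(Φ,n,ε)`. -/
def IsPressure (M : Matrix (Fin k) (Fin k) ℕ) (Φ : ℕ → Space M → ℝ) (P : ℝ) : Prop :=
  Tendsto (fun ε : ℝ => limsup (fun n : ℕ => Real.log (sepSum M Φ n ε) / n) atTop)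
    (𝓝[>] (0 : ℝ)) (𝓝 P)

/-- The sequence `Φ = (φ_n)` is asymptotically additive. -/
def AsympAdd (M : Matrix (Fin k) (Fin k) ℕ) (Φ : ℕ → Space M → ℝ) : Prop :=
  (∀ n, Continuous (Φ n)) ∧
  ∀ ε > (0 : ℝ), ∃ ρ : Space M → ℝ, Continuous ρ ∧
    limsup (fun n : ℕ => (⨆ ω : Space M, |Φ n ω - birk M ρ n ω|) / n) atTop < ε

/-- `μ` is a weak Gibbs measure for the sequence `Φ` with constant `P`. -/
def WeakGibbs (M : Matrix (Fin k) (Fin k) ℕ) (Φ : ℕ → Space M → ℝ) (P : ℝ)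
    (μ : Measure (Space M)) : Prop :=
  ∃ K : ℕ → ℝ, (∀ n, 0 < K n) ∧ Tendsto (fun n : ℕ => Real.log (K n) / n) atTop (𝓝 0) ∧
    ∀ n : ℕ, ∀ w : Fin n → Fin k, ∀ ω ∈ cyl M n w,
      1 / K n ≤ (μ (cyl M n w)).toReal / Real.exp (Φ n ω - n * P) ∧
      (μ (cyl M n w)).toReal / Real.exp (Φ n ω - n * P) ≤ K n

/-- `μ` is a Gibbs measure for the sequence `Φ` with constant `P`. -/
def Gibbs (M : Matrix (Fin k) (Fin k) ℕ) (Φ : ℕ → Space M → ℝ) (P : ℝ)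
    (μ : Measure (Space M)) : Prop :=
  ∃ K : ℝ, 0 < K ∧
    ∀ n : ℕ, ∀ w : Fin n → Fin k, ∀ ω ∈ cyl M n w,
      1 / K ≤ (μ (cyl M n w)).toReal / Real.exp (Φ n ω - n * P) ∧
      (μ (cyl M n w)).toReal / Real.exp (Φ n ω - n * P) ≤ K

/-- Sum of `exp(φ_n ω)` over points of period `n`. -/
noncomputable def perSum (M : Matrix (Fin k) (Fin k) ℕ) (Φ : ℕ → Space M → ℝ) (n : ℕ) : ℝ :=
  ∑' ω : {ω : Space M // (shift M)^[n] ω = ω}, Real.exp (Φ n ω.1)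

/-- `var_n(g)`: the variation of `g` over cylinders of length `n`. -/
noncomputable def varCyl (M : Matrix (Fin k) (Fin k) ℕ) (n : ℕ) (g : Space M → ℝ) : ℝ :=
  sSup {x | ∃ ω κ : Space M, (∀ j : Fin n, ω.1 j.1 = κ.1 j.1) ∧ x = |g ω - g κ|}

open Classical in
/-- `∑_{C ∈ Z_n} exp (sup_C S_n φ)`: the cylinder partition sum of `φ`. -/
noncomputable def cylSum (M : Matrix (Fin k) (Fin k) ℕ) (φ : Space M → ℝ) (n : ℕ) : ℝ :=
  ∑ w ∈ Finset.univ.filter (fun w : Fin n → Fin k => (cyl M n w).Nonempty),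
    Real.exp (sSup (birk M φ n '' cyl M n w))

end WG

namespace WG

/-- An expanding Markov map of the unit interval, together with its symbolic
representation by the topologically mixing subshift of finite type `(Space M, shift M)`
and the natural projection `π`. -/
structure ExpandingMarkovMap {k : ℕ} (M : Matrix (Fin k) (Fin k) ℕ) where
  /-- the map -/
  T : ℝ → ℝ
  /-- its derivative -/
  T' : ℝ → ℝ
  /-- left endpoints of the intervals `I_i` -/
  a : Fin k → ℝ
  /-- right endpoints of the intervals `I_i` -/
  b : Fin k → ℝ
  le : ∀ i, a i ≤ b i
  sub : ∀ i, Set.Icc (a i) (b i) ⊆ Set.Icc (0 : ℝ) 1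
  disj : ∀ i j, i ≠ j → Disjoint (Set.Icc (a i) (b i)) (Set.Icc (a j) (b j))
  mapsInto : ∀ i, ∀ x ∈ Set.Icc (a i) (b i), T x ∈ Set.Icc (0 : ℝ) 1
  /-- the coding subshift is topologically mixing -/
  mixing : Mixing M
  /-- `T` is differentiable on `∪ I_i` with continuous derivative `T'` (i.e. `C¹`) -/
  deriv : ∀ x ∈ ⋃ i, Set.Icc (a i) (b i),
    HasDerivWithinAt T (T' x) (⋃ i, Set.Icc (a i) (b i)) x
  derivCont : ContinuousOn T' (⋃ i, Set.Icc (a i) (b i))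
  /-- `|T'| ≥ 1` on `∪ I_i` -/
  expanding : ∀ x ∈ ⋃ i, Set.Icc (a i) (b i), 1 ≤ |T' x|
  /-- at most finitely many points where `|T'| = 1` -/
  finiteNonHyp : {x ∈ ⋃ i, Set.Icc (a i) (b i) | |T' x| = 1}.Finite
  /-- the natural projection `π : Σ → Λ` -/
  proj : Space M → ℝ
  projCont : Continuous proj
  projInj : Function.Injective proj
  /-- conjugacy `π ∘ σ = T ∘ π` -/
  projConj : ∀ ω : Space M, proj (shift M ω) = T (proj ω)
  /-- `π` sends the cylinder `[i]` into the interval `I_i` -/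
  projCode : ∀ ω : Space M, proj ω ∈ Set.Icc (a (ω.1 0)) (b (ω.1 0))

variable {k : ℕ} {M : Matrix (Fin k) (Fin k) ℕ}

/-- `D_n(ω)`: the diameter of the projection of the length-`n` cylinder containing `ω`. -/
noncomputable def cylDiam (E : ExpandingMarkovMap M) (n : ℕ) (ω : Space M) : ℝ :=
  Metric.diam (E.proj '' cyl M n (word M n ω))

/-- The entropy partition sum `H_n(ν) = −∑_w ν(C_w) log ν(C_w)` over words of length `n`.
For an invariant measure, `h(ν) = lim H_n(ν)/n` (the cylinders form a generating
partition), which we use to define the Kolmogorov–Sinai entropy on the shift space. -/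
noncomputable def entSum (ν : MeasureTheory.Measure (Space M)) (n : ℕ) : ℝ :=
  -∑ w : Fin n → Fin k, (ν (cyl M n w)).toReal * Real.log ((ν (cyl M n w)).toReal)

/-- The Kolmogorov–Sinai entropy of a shift-invariant measure `ν` on the subshift. -/
noncomputable def KSEntropy (ν : MeasureTheory.Measure (Space M)) : ℝ :=
  Filter.liminf (fun n : ℕ => entSum ν n / n) Filter.atTop

end WG

/-!
For two points `x`, `y` of a cylinder around `ω`, the mean value theorem and the uniform continuity
of `log |T'|` give `|T (π x) - T (π y)| = exp (log |T' (π ω)| + o(1)) * |π x - π y|`, uniformly as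
the length of the cylinder grows. The shift maps the cylinder of length `n + 1` around `ω` onto the
cylinder of length `n` around `σ ω`, so `log D_{n+1} ω - log D_n (σ ω) = -log |T' (π ω)| + o(1)`
uniformly in `ω`, and telescoping shows that `log D_n` is within `o(n)` of the Birkhoff sums of
`-log |T' ∘ π|`. The logarithms are genuine unless some long cylinder has a projection of diameter
`0`; then transitivity makes all of them degenerate, and `log D_n = 0` for large `n` because
`Real.log 0 = 0`.
-/

namespace WG

section Birkhoff

variable {k : ℕ} {M : Matrix (Fin k) (Fin k) ℕ}

instance : CompactSpace (Space M) := by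
  have h_closed : IsClosed {ω : ℕ → Fin k | ∀ i, M (ω i) (ω (i + 1)) = 1} := by
    rw [ofPred_forall]
    exact isClosed_iInter fun i =>
      isClosed_eq (continuous_of_discreteTopology.comp₂ (g := fun p : Fin k × Fin k => M p.1 p.2)
        (continuous_apply i) (continuous_apply (i + 1))) continuous_const
  exact isCompact_iff_compactSpace.mp h_closed.isCompact

lemma continuous_shift : Continuous (shift M) :=
  continuous_induced_rng.2 <| continuous_pi fun i =>
    (continuous_apply (i + 1)).comp continuous_subtype_val

lemma continuous_birk {f : Space M → ℝ} (hf : Continuous f) (n : ℕ) : Continuous (birk M f n) :=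
  continuous_finsetSum _ fun j _ => hf.comp (continuous_shift.iterate j)

lemma birk_succ (f : Space M → ℝ) (n : ℕ) (ω : Space M) :
    birk M f (n + 1) ω = f ω + birk M f n (shift M ω) := by
  simp only [birk, Finset.sum_range_succ', Function.iterate_succ_apply, Function.iterate_zero_apply,
    add_comm]

lemma abs_sub_birk_le {Φ : ℕ → Space M → ℝ} {ρ : Space M → ℝ} {C η : ℝ} {N : ℕ}
    (hN : ∀ ω, |Φ N ω - birk M ρ N ω| ≤ C)
    (h_step : ∀ n ≥ N, ∀ ω, |Φ (n + 1) ω - (ρ ω + Φ n (shift M ω))| ≤ η)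
    {n : ℕ} (hn : N ≤ n) (ω : Space M) :
    |Φ n ω - birk M ρ n ω| ≤ C + (n - N) * η := by
  induction n, hn using Nat.le_induction generalizing ω with
  | base => simpa using hN ω
  | succ n hn ih =>
    calc |Φ (n + 1) ω - birk M ρ (n + 1) ω|
        = |(Φ (n + 1) ω - (ρ ω + Φ n (shift M ω)))
            + (Φ n (shift M ω) - birk M ρ n (shift M ω))| := by rw [birk_succ]; ring_nf
      _ ≤ η + (C + (n - N) * η) := (abs_add_le _ _).trans (add_le_add (h_step n hn ω) (ih _))
      _ = C + ((n + 1 : ℕ) - N) * η := by push_cast; ring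

lemma limsup_div_natCast_le {u : ℕ → ℝ} {C η : ℝ} (hu : ∀ n, 0 ≤ u n)
    (h : ∀ᶠ n : ℕ in atTop, u n ≤ C + n * η) :
    limsup (fun n : ℕ => u n / n) atTop ≤ η := by
  have h_lim : Tendsto (fun n : ℕ => C / n + η) atTop (𝓝 η) := by
    simpa using (tendsto_const_div_atTop_nhds_zero_nat C).add_const η
  refine (limsup_le_limsup ?_ ?_ h_lim.isBoundedUnder_le).trans_eq h_lim.limsup_eq
  · filter_upwards [h, eventually_gt_atTop 0] with n hn hn_pos
    have : (0 : ℝ) < n := Nat.cast_pos.2 hn_pos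
    rw [div_add' _ _ _ this.ne', mul_comm η]
    gcongr
  · exact IsBoundedUnder.isCoboundedUnder_le
      (isBoundedUnder_of ⟨0, fun n => div_nonneg (hu n) n.cast_nonneg⟩)

theorem asympAdd_of_eventually_abs_sub_le {Φ : ℕ → Space M → ℝ} (hΦ : ∀ n, Continuous (Φ n))
    {ρ : Space M → ℝ} (hρ : Continuous ρ)
    (h : ∀ η > 0, ∀ᶠ n in atTop, ∀ ω, |Φ (n + 1) ω - (ρ ω + Φ n (shift M ω))| ≤ η) :
    AsympAdd M Φ := by
  refine ⟨hΦ, fun ε hε => ⟨ρ, hρ, ?_⟩⟩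
  obtain ⟨N, hN⟩ := eventually_atTop.1 (h (ε / 2) (half_pos hε))
  set C := ⨆ ω, |Φ N ω - birk M ρ N ω|
  have hC : ∀ ω, |Φ N ω - birk M ρ N ω| ≤ C :=
    le_ciSup (isCompact_range ((hΦ N).sub (continuous_birk hρ N)).abs).bddAbove
  have hC_nonneg : 0 ≤ C := Real.iSup_nonneg fun _ => abs_nonneg _
  have h_growth : ∀ᶠ n : ℕ in atTop,
      ⨆ ω, |Φ n ω - birk M ρ n ω| ≤ (C - N * (ε / 2)) + n * (ε / 2) := by
    filter_upwards [eventually_ge_atTop N] with n hn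
    have hn' : (N : ℝ) ≤ n := Nat.cast_le.2 hn
    refine Real.iSup_le (fun ω => (abs_sub_birk_le hC hN hn ω).trans_eq (by ring)) ?_
    nlinarith
  exact (limsup_div_natCast_le (fun n => Real.iSup_nonneg fun _ => abs_nonneg _)
    h_growth).trans_lt (half_lt_self hε)

end Birkhoff

section Cylinder

variable {k : ℕ} {M : Matrix (Fin k) (Fin k) ℕ} {n : ℕ}

lemma mem_cyl {w : Fin n → Fin k} {x : Space M} : x ∈ cyl M n w ↔ word M n x = w :=
  funext_iff.symm

lemma word_eq_word_iff {x y : Space M} : word M n x = word M n y ↔ ∀ j < n, x.1 j = y.1 j :=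
  funext_iff.trans Fin.forall_iff

lemma word_eq_of_le {m : ℕ} (hmn : m ≤ n) {x y : Space M} (h : word M n x = word M n y) :
    word M m x = word M m y :=
  word_eq_word_iff.2 fun j hj => word_eq_word_iff.1 h j (hj.trans_le hmn)

lemma continuous_word (n : ℕ) : Continuous (word M n) :=
  continuous_pi fun j => (continuous_apply j.1).comp continuous_subtype_val

lemma eventually_dist_lt_of_word_eq {X : Type*} [PseudoMetricSpace X] {π : Space M → X}
    (hπ : Continuous π) {δ : ℝ} (hδ : 0 < δ) :
    ∀ᶠ n in atTop, ∀ x y, word M n x = word M n y → dist (π x) (π y) < δ := by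
  have h_open : IsOpen {p : Space M × Space M | dist (π p.1) (π p.2) < δ} :=
    isOpen_lt (by fun_prop) continuous_const
  have h_anti : Antitone fun n => {p : Space M × Space M | word M n p.1 = word M n p.2} :=
    fun _ _ hmn _ hp => word_eq_of_le hmn hp
  obtain ⟨N, hN⟩ := exists_subset_nhds_of_compactSpace h_anti.directed_ge
    (fun n => isClosed_eq ((continuous_word n).comp continuous_fst)
      ((continuous_word n).comp continuous_snd))
    (U := {p | dist (π p.1) (π p.2) < δ}) (by
      rintro ⟨x, y⟩ hxy
      obtain rfl : x = y := Subtype.ext <| funext fun j =>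
        word_eq_word_iff.1 (mem_iInter.1 hxy (j + 1)) j j.lt_succ_self
      exact h_open.mem_nhds (by simpa using hδ))
  filter_upwards [eventually_ge_atTop N] with n hn x y hxy
  exact hN (show (x, y) ∈ _ from word_eq_of_le hn hxy)

lemma exists_shift_eq {i : Fin k} {ω : Space M} (h : M i (ω.1 0) = 1) :
    ∃ τ : Space M, τ.1 0 = i ∧ shift M τ = ω :=
  ⟨⟨fun n => Nat.casesOn n i ω.1, fun n => Nat.casesOn n h ω.2⟩, rfl, rfl⟩

lemma word_succ_eq_iff {x y : Space M} : word M (n + 1) x = word M (n + 1) y ↔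
    x.1 0 = y.1 0 ∧ word M n (shift M x) = word M n (shift M y) := by
  simp only [word_eq_word_iff, Nat.forall_lt_succ_left, shift]

lemma image_shift_cyl (hn : n ≠ 0) (ω : Space M) :
    shift M '' cyl M (n + 1) (word M (n + 1) ω) = cyl M n (word M n (shift M ω)) := by
  ext x
  simp only [mem_image, mem_cyl]
  constructor
  · rintro ⟨y, hy, rfl⟩
    exact (word_succ_eq_iff.1 hy).2
  · intro hx
    have h_admissible : M (ω.1 0) (x.1 0) = 1 := by
      rw [word_eq_word_iff.1 hx 0 (Nat.pos_of_ne_zero hn)]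
      exact ω.2 0
    obtain ⟨y, hy, rfl⟩ := exists_shift_eq h_admissible
    exact ⟨y, word_succ_eq_iff.2 ⟨hy, hx⟩, rfl⟩

/-- Strong transitivity of the subshift: every backward orbit `⋃ j, σ⁻ʲ {ω}` is dense, i.e. meets
every nonempty cylinder. This is what the dichotomy for diameters of long cylinders needs. -/
def StronglyTransitive (M : Matrix (Fin k) (Fin k) ℕ) : Prop :=
  ∀ (ω κ : Space M) (n : ℕ), ∃ τ, word M n τ = word M n κ ∧ ∃ j, (shift M)^[j] τ = ω

lemma exists_iterate_shift_eq (hM : ∀ i j, M i j = 0 ∨ M i j = 1) (l : ℕ) {i : Fin k}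
    {ω : Space M} (h : (M ^ l) i (ω.1 0) ≠ 0) :
    ∃ τ : Space M, τ.1 0 = i ∧ (shift M)^[l] τ = ω := by
  induction l generalizing i with
  | zero =>
    refine ⟨ω, ?_, rfl⟩
    by_contra h_ne
    exact h (by rw [pow_zero, Matrix.one_apply_ne' h_ne])
  | succ l ih =>
    rw [pow_succ', Matrix.mul_apply] at h
    obtain ⟨m, -, hm⟩ := Finset.exists_ne_zero_of_sum_ne_zero h
    obtain ⟨κ, rfl, hκ⟩ := ih (right_ne_zero_of_mul hm)
    obtain ⟨τ, hτ, rfl⟩ := exists_shift_eq ((hM _ _).resolve_left (left_ne_zero_of_mul hm))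
    exact ⟨τ, hτ, hκ⟩

lemma Mixing.stronglyTransitive (hM : Mixing M) : StronglyTransitive M := by
  intro ω κ n
  obtain ⟨h01, l, -, h_pos⟩ := hM
  suffices h_succ : ∃ τ, word M (n + 1) τ = word M (n + 1) κ ∧ ∃ j, (shift M)^[j] τ = ω by
    obtain ⟨τ, hτ, h_orbit⟩ := h_succ
    exact ⟨τ, word_eq_of_le n.le_succ hτ, h_orbit⟩
  induction n generalizing κ with
  | zero =>
    obtain ⟨τ, hτ, h_orbit⟩ := exists_iterate_shift_eq h01 l (h_pos (κ.1 0) (ω.1 0)).ne'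
    exact ⟨τ, word_succ_eq_iff.2 ⟨hτ, Subsingleton.elim _ _⟩, l, h_orbit⟩
  | succ n ih =>
    obtain ⟨τ, hτ, j, h_orbit⟩ := ih (shift M κ)
    rw [← mem_cyl, ← image_shift_cyl n.succ_ne_zero κ] at hτ
    obtain ⟨τ', hτ', rfl⟩ := hτ
    exact ⟨τ', mem_cyl.1 hτ', j + 1, h_orbit⟩

end Cylinder

section Diameter

lemma diam_image_le_mul_diam_image {α X Y : Type*} [PseudoMetricSpace X] [PseudoMetricSpace Y]
    {u : α → X} {v : α → Y} {s : Set α} {c : ℝ} (hc : 0 ≤ c) (hv : Bornology.IsBounded (v '' s))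
    (h : ∀ x ∈ s, ∀ y ∈ s, dist (u x) (u y) ≤ c * dist (v x) (v y)) :
    Metric.diam (u '' s) ≤ c * Metric.diam (v '' s) := by
  refine Metric.diam_le_of_forall_dist_le (mul_nonneg hc Metric.diam_nonneg) ?_
  rintro _ ⟨x, hx, rfl⟩ _ ⟨y, hy, rfl⟩
  refine (h x hx y hy).trans ?_
  gcongr
  exact Metric.dist_le_diam_of_mem hv (mem_image_of_mem v hx) (mem_image_of_mem v hy)

variable {k : ℕ} {M : Matrix (Fin k) (Fin k) ℕ} {X : Type*} [PseudoMetricSpace X]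
  {π : Space M → X} {g : Space M → ℝ}

/-- The diameter `D_n(ω)` for an arbitrary projection `π` of the subshift to a metric space; for an
expanding Markov map `E`, `cylDiam E` is `projDiam E.proj`. -/
noncomputable def projDiam (π : Space M → X) (n : ℕ) (ω : Space M) : ℝ :=
  Metric.diam (π '' cyl M n (word M n ω))

/-- Along `π`, the shift is asymptotically a similarity: on long cylinders around `ω` it multiplies
distances by `exp (g ω + o(1))`, uniformly in `ω`. -/
def AsympConformal (π : Space M → X) (g : Space M → ℝ) : Prop :=
  ∀ η > 0, ∀ᶠ n in atTop, ∀ ω x y, word M n x = word M n ω → word M n y = word M n ω →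
    Real.exp (g ω - η) * dist (π x) (π y) ≤ dist (π (shift M x)) (π (shift M y)) ∧
    dist (π (shift M x)) (π (shift M y)) ≤ Real.exp (g ω + η) * dist (π x) (π y)

lemma projDiam_nonneg (n : ℕ) (ω : Space M) : 0 ≤ projDiam π n ω :=
  Metric.diam_nonneg

lemma continuous_log_projDiam (π : Space M → X) (n : ℕ) :
    Continuous fun ω => Real.log (projDiam π n ω) :=
  (continuous_of_discreteTopology (f := fun w => Real.log (Metric.diam (π '' cyl M n w)))).comp
    (continuous_word n)

lemma isBounded_image_of_continuous (hπ : Continuous π) (s : Set (Space M)) :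
    Bornology.IsBounded (π '' s) :=
  (isCompact_range hπ).isBounded.subset (image_subset_range π s)

lemma projDiam_le_of_word_eq (hπ : Continuous π) {m n : ℕ} (hmn : m ≤ n) {τ κ : Space M}
    (h : word M m τ = word M m κ) : projDiam π n τ ≤ projDiam π m κ :=
  Metric.diam_mono
    (image_mono fun _ hx => mem_cyl.2 ((word_eq_of_le hmn (mem_cyl.1 hx)).trans h))
    (isBounded_image_of_continuous hπ _)

lemma AsympConformal.projDiam_shift (hg : AsympConformal π g) (hπ : Continuous π) {η : ℝ}
    (hη : 0 < η) : ∀ᶠ n in atTop, ∀ ω,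
      Real.exp (g ω - η) * projDiam π (n + 1) ω ≤ projDiam π n (shift M ω) ∧
      projDiam π n (shift M ω) ≤ Real.exp (g ω + η) * projDiam π (n + 1) ω := by
  filter_upwards [(tendsto_add_atTop_nat 1).eventually (hg η hη), eventually_ne_atTop 0]
    with n h_dist hn ω
  have h_shift : projDiam π n (shift M ω) =
      Metric.diam ((fun x => π (shift M x)) '' cyl M (n + 1) (word M (n + 1) ω)) := by
    rw [projDiam, ← image_shift_cyl hn, image_image]
  have h_bounded (s : Set (Space M)) : Bornology.IsBounded ((fun x => π (shift M x)) '' s) :=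
    isBounded_image_of_continuous (hπ.comp continuous_shift) s
  rw [h_shift]
  constructor
  · rw [← le_inv_mul_iff₀ (Real.exp_pos _)]
    refine diam_image_le_mul_diam_image (by positivity) (h_bounded _) fun x hx y hy => ?_
    rw [le_inv_mul_iff₀ (Real.exp_pos _)]
    exact (h_dist ω x y (mem_cyl.1 hx) (mem_cyl.1 hy)).1
  · exact diam_image_le_mul_diam_image (Real.exp_nonneg _) (isBounded_image_of_continuous hπ _)
      fun x hx y hy => (h_dist ω x y (mem_cyl.1 hx) (mem_cyl.1 hy)).2

lemma AsympConformal.projDiam_pos_or_eq_zero (hg : AsympConformal π g) (hπ : Continuous π)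
    (hM : StronglyTransitive M) :
    (∀ᶠ n in atTop, ∀ ω, 0 < projDiam π n ω) ∨ ∀ᶠ n in atTop, ∀ ω, projDiam π n ω = 0 := by
  obtain ⟨N, hN⟩ := eventually_atTop.1 (hg.projDiam_shift hπ one_pos)
  have h_iterate : ∀ j, ∀ n ≥ N, ∀ τ, projDiam π (n + j) τ = 0 →
      projDiam π n ((shift M)^[j] τ) = 0 := by
    intro j
    induction j with
    | zero => exact fun _ _ _ h => h
    | succ j ih =>
      refine fun n hn τ h => ih n hn (shift M τ) (le_antisymm ?_ (projDiam_nonneg _ _))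
      simpa only [add_assoc, h, mul_zero] using (hN (n + j) (by omega) τ).2
  by_cases h_pos : ∀ n ≥ N, ∀ ω, 0 < projDiam π n ω
  · exact .inl (eventually_atTop.2 ⟨N, h_pos⟩)
  · right
    push Not at h_pos
    obtain ⟨m, -, κ, hκ⟩ := h_pos
    filter_upwards [eventually_ge_atTop (max N m)] with n hn ω
    -- `ω` is an iterate of a point `τ` whose cylinders lie in the degenerate one around `κ`.
    obtain ⟨τ, hτ, j, rfl⟩ := hM ω κ m
    exact h_iterate j n (le_of_max_le_left hn) τ <|
      ((projDiam_le_of_word_eq hπ (by omega) hτ).trans hκ).antisymm (projDiam_nonneg _ _)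

theorem AsympConformal.asympAdd_log_projDiam (h : AsympConformal π g) (hπ : Continuous π)
    (hg : Continuous g) (hM : StronglyTransitive M) :
    AsympAdd M fun n ω => Real.log (projDiam π n ω) := by
  rcases h.projDiam_pos_or_eq_zero hπ hM with h_pos | h_zero
  · refine asympAdd_of_eventually_abs_sub_le (continuous_log_projDiam π) hg.neg fun η hη => ?_
    filter_upwards [h.projDiam_shift hπ hη, h_pos, (tendsto_add_atTop_nat 1).eventually h_pos]
      with n h_shift hn hn_succ ω
    have h_lower := Real.log_le_log (mul_pos (Real.exp_pos _) (hn_succ ω)) (h_shift ω).1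
    have h_upper := Real.log_le_log (hn (shift M ω)) (h_shift ω).2
    rw [Real.log_mul (Real.exp_ne_zero _) (hn_succ ω).ne', Real.log_exp] at h_lower h_upper
    rw [Pi.neg_apply, abs_le]
    constructor <;> linarith
  · refine asympAdd_of_eventually_abs_sub_le (continuous_log_projDiam π) continuous_zero
      fun η hη => ?_
    filter_upwards [h_zero, (tendsto_add_atTop_nat 1).eventually h_zero] with n hn hn_succ ω
    simpa [hn, hn_succ] using hη.le

end Diameter

section Branches

lemma exists_abs_sub_eq_abs_deriv_mul {f f' : ℝ → ℝ} {x y : ℝ}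
    (hf : ∀ z ∈ uIcc x y, HasDerivWithinAt f (f' z) (uIcc x y) z) :
    ∃ ξ ∈ uIcc x y, |f x - f y| = |f' ξ| * |x - y| := by
  wlog hxy : x < y generalizing x y
  · rcases (not_lt.1 hxy).eq_or_lt with rfl | hlt
    · exact ⟨y, left_mem_uIcc, by simp⟩
    · rw [uIcc_comm, abs_sub_comm, abs_sub_comm x]
      exact this (by rwa [uIcc_comm]) hlt
  rw [uIcc_of_le hxy.le] at hf ⊢
  obtain ⟨ξ, hξ, h_slope⟩ := exists_hasDerivAt_eq_slope f f' hxy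
    (fun z hz => (hf z hz).continuousWithinAt)
    (fun z hz => (hf z (Ioo_subset_Icc_self hz)).hasDerivAt (Icc_mem_nhds hz.1 hz.2))
  refine ⟨ξ, Ioo_subset_Icc_self hξ, ?_⟩
  rw [abs_sub_comm, abs_sub_comm x, ← abs_mul, h_slope, div_mul_cancel₀ _ (sub_ne_zero.2 hxy.ne')]

lemma exists_forall_exp_mul_dist_le_dist_image {f f' : ℝ → ℝ} {s : Set ℝ} (hs : IsCompact s)
    (hs_conn : s.OrdConnected) (hf : ∀ x ∈ s, HasDerivWithinAt f (f' x) s x)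
    (hf' : ContinuousOn f' s) (hf'_ne : ∀ x ∈ s, f' x ≠ 0) {η : ℝ} (hη : 0 < η) :
    ∃ δ > 0, ∀ x ∈ s, ∀ y ∈ s, ∀ z ∈ s, dist x z < δ → dist y z < δ →
      Real.exp (Real.log |f' z| - η) * dist x y ≤ dist (f x) (f y) ∧
      dist (f x) (f y) ≤ Real.exp (Real.log |f' z| + η) * dist x y := by
  have h_log : ContinuousOn (fun x => Real.log |f' x|) s :=
    hf'.abs.log fun x hx => abs_ne_zero.2 (hf'_ne x hx)
  obtain ⟨δ, hδ, h_unif⟩ :=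
    Metric.uniformContinuousOn_iff.1 (hs.uniformContinuousOn_of_continuous h_log) η hη
  refine ⟨δ, hδ, fun x hx y hy z hz hxz hyz => ?_⟩
  have h_sub : uIcc x y ⊆ s := hs_conn.uIcc_subset hx hy
  obtain ⟨ξ, hξ, h_mvt⟩ :=
    exists_abs_sub_eq_abs_deriv_mul fun w hw => (hf w (h_sub hw)).mono h_sub
  have hξz : dist ξ z < δ := (convex_ball z δ).ordConnected.uIcc_subset hxz hyz hξ
  have h_close := h_unif ξ (h_sub hξ) z hz hξz
  rw [Real.dist_eq, abs_lt] at h_close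
  rw [Real.dist_eq, Real.dist_eq, h_mvt, ← Real.exp_log (abs_pos.2 (hf'_ne ξ (h_sub hξ)))]
  constructor <;> gcongr <;> linarith

variable {k : ℕ} {M : Matrix (Fin k) (Fin k) ℕ} {J : Fin k → Set ℝ} {f f' : Fin k → ℝ → ℝ}
  {π : Space M → ℝ}

lemma continuous_log_abs_branch_deriv (hf' : ∀ i, ContinuousOn (f' i) (J i))
    (hf'_ne : ∀ i, ∀ x ∈ J i, f' i x ≠ 0) (hπ : Continuous π) (h_code : ∀ ω, π ω ∈ J (ω.1 0)) :
    Continuous fun ω => Real.log |f' (ω.1 0) (π ω)| := by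
  have h_log : ContinuousOn (fun p : Fin k × ℝ => Real.log |f' p.1 p.2|) {p | p.2 ∈ J p.1} :=
    continuousOn_prod_of_discrete_left.2 fun i =>
      (hf' i).abs.log fun x hx => abs_ne_zero.2 (hf'_ne i x hx)
  exact h_log.comp_continuous
    (((continuous_apply 0).comp continuous_subtype_val).prodMk hπ) h_code

lemma asympConformal_of_branches (hJ : ∀ i, IsCompact (J i)) (hJ_conn : ∀ i, (J i).OrdConnected)
    (hf : ∀ i, ∀ x ∈ J i, HasDerivWithinAt (f i) (f' i x) (J i) x)
    (hf' : ∀ i, ContinuousOn (f' i) (J i)) (hf'_ne : ∀ i, ∀ x ∈ J i, f' i x ≠ 0)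
    (hπ : Continuous π) (h_code : ∀ ω, π ω ∈ J (ω.1 0))
    (h_conj : ∀ ω, π (shift M ω) = f (ω.1 0) (π ω)) :
    AsympConformal π fun ω => Real.log |f' (ω.1 0) (π ω)| := by
  intro η hη
  choose δ hδ h_distortion using fun i => exists_forall_exp_mul_dist_le_dist_image
    (hJ i) (hJ_conn i) (hf i) (hf' i) (hf'_ne i) hη
  filter_upwards [eventually_all.2 fun i => eventually_dist_lt_of_word_eq hπ (hδ i),
    eventually_gt_atTop 0] with n h_dist hn ω x y hx hy
  have hx₀ : x.1 0 = ω.1 0 := word_eq_word_iff.1 hx 0 hn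
  have hy₀ : y.1 0 = ω.1 0 := word_eq_word_iff.1 hy 0 hn
  rw [h_conj, h_conj, hx₀, hy₀]
  exact h_distortion _ _ (hx₀ ▸ h_code x) _ (hy₀ ▸ h_code y) _ (h_code ω)
    (h_dist _ x ω hx) (h_dist _ y ω hy)

end Branches

end WG

open WG in
theorem logDiam_asympAdd_general {k : ℕ} {M : Matrix (Fin k) (Fin k) ℕ} (hM : StronglyTransitive M)
    {J : Fin k → Set ℝ} (hJ : ∀ i, IsCompact (J i)) (hJ_conn : ∀ i, (J i).OrdConnected)
    {f f' : Fin k → ℝ → ℝ} (hf : ∀ i, ∀ x ∈ J i, HasDerivWithinAt (f i) (f' i x) (J i) x)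
    (hf' : ∀ i, ContinuousOn (f' i) (J i)) (hf'_ne : ∀ i, ∀ x ∈ J i, f' i x ≠ 0)
    {π : Space M → ℝ} (hπ : Continuous π) (h_code : ∀ ω, π ω ∈ J (ω.1 0))
    (h_conj : ∀ ω, π (shift M ω) = f (ω.1 0) (π ω)) :
    AsympAdd M fun n ω => Real.log (projDiam π n ω) :=
  (asympConformal_of_branches hJ hJ_conn hf hf' hf'_ne hπ h_code h_conj).asympAdd_log_projDiam hπ
    (continuous_log_abs_branch_deriv hf' hf'_ne hπ h_code) hM

open WG in
/-- Urbański, Jordan–Rams: for an expanding Markov map `T` with symbolic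
representation `(Σ,σ)` and natural projection `π`, the sequence `log D = (log D_n)_n`,
where `D_n(ω)` is the diameter of the length-`n` cylinder interval containing `π(ω)`,
is asymptotically additive on `Σ`. -/
theorem logDiam_asympAdd
    {k : ℕ} (M : Matrix (Fin k) (Fin k) ℕ) (E : ExpandingMarkovMap M) :
    AsympAdd M (fun n ω => Real.log (cylDiam E n ω)) := by
  have h_sub (i : Fin k) : Icc (E.a i) (E.b i) ⊆ ⋃ i, Icc (E.a i) (E.b i) :=
    subset_iUnion (fun i => Icc (E.a i) (E.b i)) i
  exact logDiam_asympAdd_general E.mixing.stronglyTransitive (fun _ => isCompact_Icc)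
    (fun _ => ordConnected_Icc) (fun i x hx => (E.deriv x (h_sub i hx)).mono (h_sub i))
    (fun i => E.derivCont.mono (h_sub i))
    (fun i x hx => abs_pos.1 (one_pos.trans_le (E.expanding x (h_sub i hx))))
    E.projCont E.projCode E.projConj
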